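/- For every real T ≥ 2 and every positive integer k, Σ_{0<γ≤T} n(γ,k)^{2k} ≤ (log T)/(2π) · ∫_0^T n(t, k+1)^{2k+1} dt, where the sum is over ordinates of nontrivial zeros of ζ in (0,T] counted with multiplicity. This inequality holds unconditionally. -/

import Mathlib

open Filter MeasureTheory
open scoped Real

noncomputable section

/-- The multiplicity (order of vanishing) of the Riemann zeta function at a point `z`:
the least `n` such that the `n`-th derivative of `ζ` at `z` is nonzero. -/
def zetaMult (z : ℂ) : ℕ := sInf {n : ℕ | iteratedDeriv n riemannZeta z ≠ 0}

/-- The set of nontrivial zeros of `ζ` (zeros with real part in `(0,1)`) with ordinate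
(imaginary part) in `(0, T]`. -/
def ntZeros (T : ℝ) : Set ℂ :=
  {ρ : ℂ | riemannZeta ρ = 0 ∧ 0 < ρ.re ∧ ρ.re < 1 ∧ 0 < ρ.im ∧ ρ.im ≤ T}

/-- `N(T)`: the number of nontrivial zeros with ordinate in `(0, T]`, counted with
multiplicity. -/
def zetaN (T : ℝ) : ℕ := ∑ᶠ ρ ∈ ntZeros T, zetaMult ρ

/-- `n(t, λ) = N(t + 2πλ/log T) - N(t)`. -/
def nShort (T t lam : ℝ) : ℕ := zetaN (t + 2 * π * lam / Real.log T) - zetaN t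

/-!
Put `h = 2π / log T`, and let `m(ρ)` be the multiplicity of a zero `ρ` of ordinate `γ`. If every
ordinate in `(0, T]` is at least `h`, then each `γ` lies in `(t, t + h]` for a set of
`t ∈ [0, T]` of measure exactly `h`, so
`h ∑ m(ρ) n(γ, λ)^p = ∫₀ᵀ ∑_{t < γ ≤ t + h} m(ρ) n(γ, λ)^p dt`. For such `γ` the interval
`(γ, γ + λh]` lies in `(t, t + (λ + 1)h]`, which also contains the window `(t, t + h]`, so the
integrand is at most `n(t, λ + 1)^(p + 1)`.

It remains to see that `γ ≥ 2π / log T`, for which `γ > 4.9` is enough since `T ≥ γ`. At a zero `s`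
in the critical strip the completed zeta function gives `Λ₀(s) = 1 / (s(1 - s))`, where `Λ₀` is the
Mellin transform of a function built from `θ(x) - 1` on `x > 1`. The rapid decay of `θ(x) - 1`
yields `|Λ₀(s)| ≤ 1/25`, whereas `|s(1 - s)| ≤ γ² + 1/2`.
-/

open HurwitzZeta Set

section Mellin

variable {E : Type*} [NormedAddCommGroup E] [NormedSpace ℂ E]

lemma norm_cpow_sub_one_smul_le {s : ℂ} {x C c : ℝ} {v : E} (hx : 0 < x)
    (hv : ‖v‖ ≤ C * x ^ (-c)) :
    ‖(x : ℂ) ^ (s - 1) • v‖ ≤ C * x ^ (s.re - c - 1) := by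
  rw [norm_smul, Complex.norm_cpow_eq_rpow_re_of_pos hx, Complex.sub_re, Complex.one_re]
  calc x ^ (s.re - 1) * ‖v‖ ≤ x ^ (s.re - 1) * (C * x ^ (-c)) := by gcongr
    _ = C * (x ^ (s.re - 1) * x ^ (-c)) := by ring
    _ = C * x ^ (s.re - c - 1) := by
        rw [← Real.rpow_add hx]
        congr 2
        ring

lemma norm_mellin_le {f : ℝ → E} {s : ℂ} {A B a b : ℝ} (ha : s.re < a) (hb : b < s.re)
    (hfA : ∀ x ∈ Ioi (1 : ℝ), ‖f x‖ ≤ A * x ^ (-a))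
    (hfB : ∀ x ∈ Ioc (0 : ℝ) 1, ‖f x‖ ≤ B * x ^ (-b)) :
    ‖mellin f s‖ ≤ A / (a - s.re) + B / (s.re - b) := by
  let boundTop : ℝ → ℝ := fun x ↦ A * x ^ (s.re - a - 1)
  let boundBot : ℝ → ℝ := fun x ↦ B * x ^ (s.re - b - 1)
  let bound : ℝ → ℝ := (Ioi 1).piecewise boundTop boundBot
  have eqOn_top : EqOn bound boundTop (Ioi 1) := piecewise_eqOn _ _ _
  have eqOn_bot : EqOn bound boundBot (Ioc 0 1) :=
    (piecewise_eqOn_compl _ _ _).mono fun x hx ↦ not_lt.2 hx.2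
  have integrable_top : IntegrableOn bound (Ioi 1) :=
    IntegrableOn.congr_fun ((integrableOn_Ioi_rpow_of_lt (by linarith) one_pos).const_mul A)
      eqOn_top.symm measurableSet_Ioi
  have integrable_bot : IntegrableOn bound (Ioc 0 1) :=
    IntegrableOn.congr_fun ((intervalIntegral.intervalIntegrable_rpow' (by linarith)).1.const_mul B)
      eqOn_bot.symm measurableSet_Ioc
  have integral_top : ∫ x in Ioi 1, bound x = A / (a - s.re) := by
    rw [setIntegral_congr_fun measurableSet_Ioi eqOn_top, integral_const_mul,
      integral_Ioi_rpow_of_lt (by linarith) one_pos, Real.one_rpow, ← neg_div_neg_eq]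
    ring_nf
  have integral_bot : ∫ x in Ioc 0 1, bound x = B / (s.re - b) := by
    rw [setIntegral_congr_fun measurableSet_Ioc eqOn_bot, integral_const_mul,
      ← intervalIntegral.integral_of_le zero_le_one, integral_rpow (Or.inl (by linarith)),
      Real.one_rpow, Real.zero_rpow (by linarith)]
    ring_nf
  rw [mellin, ← integral_top, ← integral_bot, add_comm,
    ← setIntegral_union (Ioc_disjoint_Ioi le_rfl) measurableSet_Ioi integrable_bot integrable_top,
    Ioc_union_Ioi_eq_Ioi zero_le_one]
  refine norm_integral_le_of_norm_le ?_ (ae_restrict_of_forall_mem measurableSet_Ioi fun x hx ↦ ?_)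
  · rw [← IntegrableOn, ← Ioc_union_Ioi_eq_Ioi zero_le_one]
    exact integrable_bot.union integrable_top
  · rcases lt_or_ge 1 x with hx1 | hx1
    · rw [eqOn_top hx1]
      exact norm_cpow_sub_one_smul_le hx (hfA x hx1)
    · rw [eqOn_bot ⟨hx, hx1⟩]
      exact norm_cpow_sub_one_smul_le hx (hfB x ⟨hx, hx1⟩)

lemma weakFEPair_f_modif_of_one_lt (P : WeakFEPair E) {x : ℝ} (hx : 1 < x) :
    P.f_modif x = P.f x - P.f₀ := by
  simp [WeakFEPair.f_modif, hx, hx.le]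

lemma norm_weakFEPair_f_modif_le_of_le_one (P : WeakFEPair E) {B b : ℝ}
    (hg : ∀ x, 1 < x → ‖P.g x - P.g₀‖ ≤ B * x ^ (-b)) {x : ℝ} (hx0 : 0 < x) (hx1 : x ≤ 1) :
    ‖P.f_modif x‖ ≤ ‖P.ε‖ * B * x ^ (b - P.k) := by
  rcases hx1.eq_or_lt with rfl | hx1
  · have B_nonneg : 0 ≤ B :=
      nonneg_of_mul_nonneg_left ((norm_nonneg _).trans (hg 2 one_lt_two)) (by positivity)
    simpa [WeakFEPair.f_modif] using by positivity
  · have f_modif_eq : P.f_modif x = (P.ε * ↑(x⁻¹ ^ P.k)) • (P.g x⁻¹ - P.g₀) := by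
      have g_modif_eq : P.g_modif x⁻¹ = P.g x⁻¹ - P.g₀ :=
        weakFEPair_f_modif_of_one_lt P.symm ((one_lt_inv₀ hx0).2 hx1)
      rw [← g_modif_eq, ← P.hf_modif_FE x⁻¹ (inv_pos.2 hx0), one_div, inv_inv]
    rw [f_modif_eq, norm_smul, norm_mul, Complex.norm_of_nonneg (by positivity)]
    calc ‖P.ε‖ * x⁻¹ ^ P.k * ‖P.g x⁻¹ - P.g₀‖
        ≤ ‖P.ε‖ * x⁻¹ ^ P.k * (B * x⁻¹ ^ (-b)) := by
          gcongr
          exact hg _ ((one_lt_inv₀ hx0).2 hx1)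
      _ = ‖P.ε‖ * B * (x⁻¹ ^ (-b) * x⁻¹ ^ P.k) := by ring
      _ = ‖P.ε‖ * B * x ^ (b - P.k) := by
          rw [← Real.rpow_add (inv_pos.2 hx0), Real.inv_rpow hx0.le, ← Real.rpow_neg hx0.le]
          congr 2
          ring

lemma norm_weakFEPair_Λ₀_le (P : WeakFEPair E) {s : ℂ} {A B a b : ℝ} (ha : s.re < a)
    (hb : P.k - b < s.re) (hf : ∀ x, 1 < x → ‖P.f x - P.f₀‖ ≤ A * x ^ (-a))
    (hg : ∀ x, 1 < x → ‖P.g x - P.g₀‖ ≤ B * x ^ (-b)) :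
    ‖P.Λ₀ s‖ ≤ A / (a - s.re) + ‖P.ε‖ * B / (s.re - (P.k - b)) := by
  refine norm_mellin_le ha hb (fun x hx ↦ ?_) fun x hx ↦ ?_
  · rw [weakFEPair_f_modif_of_one_lt P hx]
    exact hf x hx
  · rw [neg_sub]
    exact norm_weakFEPair_f_modif_le_of_le_one P hg hx.1 hx.2

end Mellin

section Window

variable {ι E : Type*} [NormedAddCommGroup E]

lemma sum_filter_mem_Ioc_add_eq_sum_indicator (s : Finset ι) (γ : ι → ℝ) (c : ι → E) (h : ℝ) :
    (fun t ↦ ∑ i ∈ s with γ i ∈ Ioc t (t + h), c i) =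
      fun t ↦ ∑ i ∈ s, (Ico (γ i - h) (γ i)).indicator (fun _ ↦ c i) t := by
  funext t
  simp only [Finset.sum_filter, indicator_apply, mem_Ioc, mem_Ico, sub_le_iff_le_add, and_comm]

lemma intervalIntegrable_indicator_Ico (x y a b : ℝ) (c : E) :
    IntervalIntegrable ((Ico x y).indicator fun _ ↦ c) volume a b :=
  intervalIntegrable_iff.2
    (IntegrableOn.indicator (integrableOn_const measure_Ioc_lt_top.ne) measurableSet_Ico)

lemma intervalIntegrable_sum_filter_mem_Ioc_add (s : Finset ι) (γ : ι → ℝ) (c : ι → E)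
    (h a b : ℝ) :
    IntervalIntegrable (fun t ↦ ∑ i ∈ s with γ i ∈ Ioc t (t + h), c i) volume a b := by
  rw [sum_filter_mem_Ioc_add_eq_sum_indicator, ← Finset.sum_fn]
  exact IntervalIntegrable.sum s fun i _ ↦ intervalIntegrable_indicator_Ico _ _ a b (c i)

variable [NormedSpace ℝ E] [CompleteSpace E]

lemma integral_indicator_Ico {x y a b : ℝ} (hax : a ≤ x) (hxy : x ≤ y) (hyb : y ≤ b) (c : E) :
    ∫ t in a..b, (Ico x y).indicator (fun _ ↦ c) t = (y - x) • c := by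
  rw [intervalIntegral.integral_of_le (hax.trans (hxy.trans hyb)), integral_Ioc_eq_integral_Ioo,
    ← integral_Ico_eq_integral_Ioo, setIntegral_indicator measurableSet_Ico,
    inter_eq_right.2 (Ico_subset_Ico hax hyb), setIntegral_const, Real.volume_real_Ico_of_le hxy]

lemma integral_sum_filter_mem_Ioc_add {s : Finset ι} {γ : ι → ℝ} (c : ι → E) {h a b : ℝ}
    (hh : 0 ≤ h) (hγ : ∀ i ∈ s, γ i ∈ Icc (a + h) b) :
    ∫ t in a..b, ∑ i ∈ s with γ i ∈ Ioc t (t + h), c i = h • ∑ i ∈ s, c i := by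
  rw [sum_filter_mem_Ioc_add_eq_sum_indicator, Finset.smul_sum,
    intervalIntegral.integral_finsetSum fun i _ ↦ intervalIntegrable_indicator_Ico _ _ a b (c i)]
  refine Finset.sum_congr rfl fun i hi ↦ ?_
  rw [integral_indicator_Ico (le_sub_iff_add_le.2 (hγ i hi).1) (sub_le_self _ hh) (hγ i hi).2,
    sub_sub_cancel]

end Window

lemma intervalIntegrable_shift_sub_pow {N : ℝ → ℕ} (hN : Monotone N) (d : ℝ) (p : ℕ) (a b : ℝ) :
    IntervalIntegrable (fun t ↦ ((N (t + d) - N t : ℕ) : ℝ) ^ p) volume a b := by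
  have measurable_sub : Measurable fun t ↦ N (t + d) - N t :=
    (hN.measurable.comp (measurable_add_const d)).sub hN.measurable
  refine intervalIntegrable_iff.2 <|
    Measure.integrableOn_of_bounded (M := (N (max a b + d) : ℝ) ^ p) measure_Ioc_lt_top.ne
      ((measurable_from_nat.comp measurable_sub).pow_const p).aestronglyMeasurable <|
      ae_restrict_of_forall_mem measurableSet_uIoc fun t ht ↦ ?_
  rw [Real.norm_of_nonneg (by positivity)]
  gcongr
  exact (Nat.sub_le _ _).trans (hN (by gcongr; exact ht.2))

lemma exp_neg_pi_lt : Real.exp (-π) < 1 / 21 := by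
  have exp_three : (2.7 : ℝ) ^ 3 ≤ Real.exp 3 := by
    have exp_one_pow : Real.exp 1 ^ 3 = Real.exp 3 := by exact_mod_cast Real.exp_one_pow 3
    rw [← exp_one_pow]
    gcongr
    linarith [Real.exp_one_gt_d9]
  have exp_pi_sub_three : 1.14 ≤ Real.exp (π - 3) := by
    linarith [Real.add_one_le_exp (π - 3), Real.pi_gt_d2]
  have exp_pi : 21 < Real.exp π :=
    calc (21 : ℝ) < 2.7 ^ 3 * 1.14 := by norm_num
      _ ≤ Real.exp 3 * Real.exp (π - 3) := by gcongr
      _ = Real.exp π := by rw [← Real.exp_add, add_sub_cancel]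
  rw [Real.exp_neg, one_div]
  gcongr

lemma pow_three_mul_exp_neg_pi_mul_le {x : ℝ} (hx : 1 ≤ x) :
    x ^ 3 * Real.exp (-π * x) ≤ Real.exp (-π) := by
  calc x ^ 3 * Real.exp (-π * x)
      ≤ Real.exp (x - 1) ^ 3 * Real.exp (-π * x) := by
        gcongr
        linarith [Real.add_one_le_exp (x - 1)]
    _ = Real.exp (-π + (3 - π) * (x - 1)) := by
        rw [← Real.exp_nat_mul, ← Real.exp_add]
        congr 1
        push_cast
        ring
    _ ≤ Real.exp (-π) := by
        gcongr
        nlinarith [Real.pi_gt_three]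

lemma abs_evenKernel_zero_sub_one_le {x : ℝ} (hx : 1 ≤ x) :
    |evenKernel 0 x - 1| ≤ 1 / 10 * x ^ (-3 : ℝ) := by
  have kernel_eq_theta : (evenKernel 0 x : ℂ) = jacobiTheta (Complex.I * x) := by
    simpa [jacobiTheta_eq_jacobiTheta₂] using evenKernel_def 0 x
  have im_eq : (Complex.I * x).im = x := by simp
  have theta_le := norm_jacobiTheta_sub_one_le (τ := Complex.I * x) (by rw [im_eq]; linarith)
  rw [← kernel_eq_theta, im_eq] at theta_le
  norm_cast at theta_le
  have exp_le : Real.exp (-π * x) ≤ 1 / 21 :=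
    (Real.exp_le_exp.2 (by nlinarith [Real.pi_pos])).trans exp_neg_pi_lt.le
  have cube_pos : 0 < x ^ 3 := by positivity
  calc |evenKernel 0 x - 1| ≤ 2 / (1 - Real.exp (-π * x)) * Real.exp (-π * x) := theta_le
    _ ≤ 2 / (1 - 1 / 21) * (1 / 21 / x ^ 3) := by
        gcongr
        rw [le_div_iff₀' cube_pos]
        exact (pow_three_mul_exp_neg_pi_mul_le hx).trans exp_neg_pi_lt.le
    _ = 1 / 10 * x ^ (-3 : ℝ) := by
        rw [Real.rpow_neg (by linarith)]
        norm_cast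
        ring

lemma norm_completedRiemannZeta₀_le {s : ℂ} (h0 : 0 ≤ s.re) (h1 : s.re ≤ 1) :
    ‖completedRiemannZeta₀ s‖ ≤ 1 / 25 := by
  have norm_kernel_sub_one_le (x : ℝ) (hx : 1 < x) :
      ‖(evenKernel 0 x : ℂ) - 1‖ ≤ 1 / 10 * x ^ (-3 : ℝ) := by
    exact_mod_cast abs_evenKernel_zero_sub_one_le hx.le
  have re_half : (s / 2).re = s.re / 2 := Complex.div_ofNat_re s 2
  have k_eq : (hurwitzEvenFEPair 0).k = 1 / 2 := rfl
  have Λ₀_le : ‖(hurwitzEvenFEPair 0).Λ₀ (s / 2)‖ ≤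
      1 / 10 / (3 - s.re / 2) + 1 / 10 / (s.re / 2 - (1 / 2 - 3)) := by
    have := norm_weakFEPair_Λ₀_le (hurwitzEvenFEPair 0) (s := s / 2) (A := 1 / 10) (B := 1 / 10)
      (a := 3) (b := 3) (by linarith) (by linarith)
      (by simpa [hurwitzEvenFEPair] using norm_kernel_sub_one_le)
      (by simpa [hurwitzEvenFEPair, ← evenKernel_eq_cosKernel_of_zero] using norm_kernel_sub_one_le)
    simpa [hurwitzEvenFEPair] using this
  calc ‖completedRiemannZeta₀ s‖ = ‖(hurwitzEvenFEPair 0).Λ₀ (s / 2)‖ / 2 := by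
        rw [completedRiemannZeta₀, completedHurwitzZetaEven₀, norm_div, Complex.norm_ofNat]
    _ ≤ (1 / 10 / (5 / 2) + 1 / 10 / (5 / 2)) / 2 := by
        grw [Λ₀_le]
        gcongr <;> linarith
    _ = 1 / 25 := by norm_num

lemma completedRiemannZeta₀_mul_eq_one_of_riemannZeta_eq_zero {s : ℂ} (hs : riemannZeta s = 0)
    (h0 : 0 < s.re) (h1 : s.re < 1) :
    completedRiemannZeta₀ s * (s * (1 - s)) = 1 := by
  have hs0 : s ≠ 0 := by rintro rfl; simp at h0
  have hs1 : 1 - s ≠ 0 := by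
    intro h
    simp [← sub_eq_zero.1 h] at h1
  rw [riemannZeta_def_of_ne_zero hs0, div_eq_zero_iff,
    or_iff_left (Complex.Gammaℝ_ne_zero_of_re_pos h0), completedRiemannZeta_eq] at hs
  field_simp at hs
  linear_combination hs

lemma norm_mul_one_sub_le {s : ℂ} (h0 : 0 ≤ s.re) (h1 : s.re ≤ 1) :
    ‖s * (1 - s)‖ ≤ s.im ^ 2 + 1 / 2 := by
  have norm_sq : ‖s‖ ^ 2 = s.re ^ 2 + s.im ^ 2 := by
    rw [Complex.sq_norm, Complex.normSq_apply]
    ring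
  have norm_one_sub_sq : ‖1 - s‖ ^ 2 = (1 - s.re) ^ 2 + s.im ^ 2 := by
    rw [Complex.sq_norm, Complex.normSq_apply, Complex.sub_re, Complex.sub_im, Complex.one_re,
      Complex.one_im]
    ring
  rw [norm_mul]
  nlinarith [two_mul_le_add_sq ‖s‖ ‖1 - s‖]

lemma lt_abs_im_of_riemannZeta_eq_zero {s : ℂ} (hs : riemannZeta s = 0) (h0 : 0 < s.re)
    (h1 : s.re < 1) : 4.9 < |s.im| := by
  have one_le : 1 ≤ 1 / 25 * (s.im ^ 2 + 1 / 2) :=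
    calc (1 : ℝ) = ‖completedRiemannZeta₀ s‖ * ‖s * (1 - s)‖ := by
          rw [← norm_mul, completedRiemannZeta₀_mul_eq_one_of_riemannZeta_eq_zero hs h0 h1,
            norm_one]
      _ ≤ 1 / 25 * (s.im ^ 2 + 1 / 2) := by
          gcongr
          · exact norm_completedRiemannZeta₀_le h0.le h1.le
          · exact norm_mul_one_sub_le h0.le h1.le
  refine lt_of_pow_lt_pow_left₀ 2 (abs_nonneg _) ?_
  rw [sq_abs]
  linarith

lemma two_pi_div_log_le_im {T : ℝ} {ρ : ℂ} (hρ : ρ ∈ ntZeros T) : 2 * π / Real.log T ≤ ρ.im := by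
  obtain ⟨zeta_eq_zero, re_pos, re_lt_one, im_pos, im_le⟩ := hρ
  have lt_im : 4.9 < ρ.im := by
    simpa only [abs_of_pos im_pos] using
      lt_abs_im_of_riemannZeta_eq_zero zeta_eq_zero re_pos re_lt_one
  have log_four_le : 2 * Real.log 2 ≤ Real.log T := by
    calc 2 * Real.log 2 = Real.log (2 ^ 2) := by rw [Real.log_pow]; norm_num
      _ ≤ Real.log T := Real.log_le_log (by norm_num) (by linarith)
  have log_two_gt := Real.log_two_gt_d9
  rw [div_le_iff₀ (by linarith)]
  nlinarith [Real.pi_lt_d2]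

lemma ntZeros_finite (T : ℝ) : (ntZeros T).Finite := by
  have rectangle_compact : IsCompact (Icc 0 1 ×ℂ Icc 0 T) := isCompact_Icc.reProdIm isCompact_Icc
  refine rectangle_compact.inter_riemannZetaZeros_finite.subset ?_
  rintro ρ ⟨zeta_eq_zero, re_pos, re_lt_one, im_pos, im_le⟩
  exact ⟨⟨⟨re_pos.le, re_lt_one.le⟩, im_pos.le, im_le⟩, zeta_eq_zero⟩

lemma ntZeros_mono : Monotone ntZeros :=
  fun _ _ hTU _ ⟨hzero, hre_pos, hre_lt, him_pos, him_le⟩ ↦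
    ⟨hzero, hre_pos, hre_lt, him_pos, him_le.trans hTU⟩

/-- The nontrivial zeros with ordinate in `(0, T]` as a `Finset`, so that sums over them can be
rearranged without `finsum` side conditions. -/
def ntZerosFinset (T : ℝ) : Finset ℂ := (ntZeros_finite T).toFinset

lemma mem_ntZerosFinset {T : ℝ} {ρ : ℂ} : ρ ∈ ntZerosFinset T ↔ ρ ∈ ntZeros T :=
  Set.Finite.mem_toFinset _

lemma zetaN_eq_sum (T : ℝ) : zetaN T = ∑ ρ ∈ ntZerosFinset T, zetaMult ρ :=
  finsum_mem_eq_finite_toFinset_sum _ (ntZeros_finite T)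

lemma zetaN_mono : Monotone zetaN := fun a b hab ↦ by
  rw [zetaN_eq_sum, zetaN_eq_sum]
  refine Finset.sum_le_sum_of_subset fun ρ hρ ↦ ?_
  exact mem_ntZerosFinset.2 (ntZeros_mono hab (mem_ntZerosFinset.1 hρ))

lemma sum_filter_zetaMult_le (T : ℝ) {t u : ℝ} (htu : t ≤ u) :
    ∑ ρ ∈ ntZerosFinset T with ρ.im ∈ Ioc t u, zetaMult ρ ≤ zetaN u - zetaN t := by
  refine Nat.le_sub_of_add_le ?_
  have window_disjoint :
      Disjoint {ρ ∈ ntZerosFinset T | ρ.im ∈ Ioc t u} (ntZerosFinset t) := by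
    refine Finset.disjoint_left.2 fun ρ hwindow hbelow ↦ ?_
    exact (Finset.mem_filter.1 hwindow).2.1.not_ge (mem_ntZerosFinset.1 hbelow).2.2.2.2
  rw [zetaN_eq_sum, zetaN_eq_sum, ← Finset.sum_union window_disjoint]
  refine Finset.sum_le_sum_of_subset (Finset.union_subset (fun ρ hρ ↦ ?_) fun ρ hρ ↦ ?_)
  · obtain ⟨hρ, him⟩ := Finset.mem_filter.1 hρ
    obtain ⟨zeta_eq_zero, re_pos, re_lt_one, im_pos, -⟩ := mem_ntZerosFinset.1 hρ
    exact mem_ntZerosFinset.2 ⟨zeta_eq_zero, re_pos, re_lt_one, im_pos, him.2⟩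
  · exact mem_ntZerosFinset.2 (ntZeros_mono htu (mem_ntZerosFinset.1 hρ))

lemma sum_filter_zetaMult_mul_zetaN_sub_pow_le {T t h d : ℝ} (hh : 0 ≤ h) (hd : 0 ≤ d) (p : ℕ) :
    ∑ ρ ∈ ntZerosFinset T with ρ.im ∈ Ioc t (t + h),
        (zetaMult ρ : ℝ) * ((zetaN (ρ.im + d) - zetaN ρ.im : ℕ) : ℝ) ^ p ≤
      ((zetaN (t + (d + h)) - zetaN t : ℕ) : ℝ) ^ (p + 1) := by
  set n := zetaN (t + (d + h)) - zetaN t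
  calc _ ≤ ∑ ρ ∈ ntZerosFinset T with ρ.im ∈ Ioc t (t + h), (zetaMult ρ : ℝ) * (n : ℝ) ^ p := by
        gcongr with ρ hρ
        obtain ⟨lt_im, im_le⟩ := (Finset.mem_filter.1 hρ).2
        exact tsub_le_tsub (zetaN_mono (by linarith)) (zetaN_mono lt_im.le)
    _ = ((∑ ρ ∈ ntZerosFinset T with ρ.im ∈ Ioc t (t + h), zetaMult ρ : ℕ) : ℝ) * (n : ℝ) ^ p := by
        rw [← Finset.sum_mul, Nat.cast_sum]
    _ ≤ n * (n : ℝ) ^ p := by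
        gcongr
        exact (sum_filter_zetaMult_le T (by linarith)).trans
          (tsub_le_tsub_right (zetaN_mono (by linarith)) _)
    _ = (n : ℝ) ^ (p + 1) := (pow_succ' _ _).symm

lemma mul_sum_zetaN_sub_pow_le_integral {T h d : ℝ} (hT : 0 ≤ T) (hh : 0 ≤ h)
    (hd : 0 ≤ d) (him : ∀ ρ ∈ ntZeros T, h ≤ ρ.im) (p : ℕ) :
    h * ∑ ρ ∈ ntZerosFinset T,
        (zetaMult ρ : ℝ) * ((zetaN (ρ.im + d) - zetaN ρ.im : ℕ) : ℝ) ^ p ≤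
      ∫ t in (0 : ℝ)..T, ((zetaN (t + (d + h)) - zetaN t : ℕ) : ℝ) ^ (p + 1) := by
  have im_mem (ρ : ℂ) (hρ : ρ ∈ ntZerosFinset T) : ρ.im ∈ Icc (0 + h) T := by
    rw [mem_ntZerosFinset] at hρ
    exact ⟨by simpa using him ρ hρ, hρ.2.2.2.2⟩
  rw [← smul_eq_mul, ← integral_sum_filter_mem_Ioc_add _ hh im_mem]
  exact intervalIntegral.integral_mono hT (intervalIntegrable_sum_filter_mem_Ioc_add ..)
    (intervalIntegrable_shift_sub_pow zetaN_mono ..)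
    fun t ↦ sum_filter_zetaMult_mul_zetaN_sub_pow_le hh hd p

theorem sum_nshort_le_integral_general {T lam : ℝ} (hT : 1 < T) (hlam : 0 ≤ lam) (p : ℕ) :
    ∑ᶠ ρ ∈ ntZeros T, (zetaMult ρ : ℝ) * (nShort T ρ.im lam : ℝ) ^ p ≤
      Real.log T / (2 * π) * ∫ t in (0 : ℝ)..T, (nShort T t (lam + 1) : ℝ) ^ (p + 1) := by
  have log_pos : 0 < Real.log T := Real.log_pos hT
  have window_pos : 0 < 2 * π / Real.log T := by positivity
  have shift_add_one : 2 * π * (lam + 1) / Real.log T =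
      2 * π * lam / Real.log T + 2 * π / Real.log T := by ring
  rw [finsum_mem_eq_finite_toFinset_sum _ (ntZeros_finite T), ← inv_div,
    le_inv_mul_iff₀ window_pos]
  simp only [nShort, shift_add_one]
  exact mul_sum_zetaN_sub_pow_le_integral (by linarith) window_pos.le (by positivity)
    (fun ρ ↦ two_pi_div_log_le_im) p

/-- (Unconditional.) For every real `T ≥ 2` and every positive integer `k`,
`Σ_{0<γ≤T} n(γ,k)^{2k} ≤ (log T)/(2π) ∫₀^T n(t,k+1)^{2k+1} dt`, where the sum runs over
ordinates of nontrivial zeros of `ζ` in `(0,T]` counted with multiplicity. -/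
theorem sum_nshort_le_integral :
    ∀ T : ℝ, 2 ≤ T → ∀ k : ℕ, 1 ≤ k →
      (∑ᶠ ρ ∈ ntZeros T, (zetaMult ρ : ℝ) * (nShort T ρ.im k : ℝ) ^ (2 * k)) ≤
        Real.log T / (2 * π) * ∫ t in (0:ℝ)..T, (nShort T t (k + 1) : ℝ) ^ (2 * k + 1) := by
  intro T hT k _
  exact sum_nshort_le_integral_general (by linarith) k.cast_nonneg (2 * k)
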